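/- Let n ≥ 2, let s, t > 0 with s + t = 2, and let μ, ν be nonzero finite Borel measures on ℝⁿ with compact support such that I_s(μ) < ∞ and I_t(ν) < ∞. Then the set of unit vectors e ∈ S^{n−1} for which π_e(spt μ) ∩ π_e(spt ν) ≠ ∅ has positive (n−1)-dimensional Hausdorff measure in S^{n−1}. -/

import Mathlib

open MeasureTheory Metric Set
open scoped ENNReal RealInnerProductSpace

/-- The topological support of a measure: points all of whose neighbourhoods
have positive measure. -/
def sptm (n : ℕ) (μ : MeasureTheory.Measure (EuclideanSpace ℝ (Fin n))) :
    Set (EuclideanSpace ℝ (Fin n)) :=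
  {x | ∀ r > 0, 0 < μ (Metric.ball x r)}

/-- The `s`-energy `I_s(μ) = ∬ |x-y|^{-s} dμ(x) dμ(y)` of a measure. -/
noncomputable def energyI (n : ℕ) (s : ℝ)
    (μ : MeasureTheory.Measure (EuclideanSpace ℝ (Fin n))) : ℝ≥0∞ :=
  ∫⁻ x, ∫⁻ y, (‖x - y‖₊ : ℝ≥0∞) ^ (-s) ∂μ ∂μ

/-!
Let `φ` and `ψ` be the characteristic functions of `μ` and `ν`, so that `φ * conj ψ` is that of the
difference measure `σ`, the image of `μ × ν` under `(x, y) ↦ x - y`. If the projections of the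
supports to the line through `v` are disjoint compact sets, then the projection of `σ` stays away
from `0`, and the integral of `φ (r v) * conj (ψ (r v))` over `r ∈ ℝ`, a multiple of its density at
`0`, vanishes. A null set of directions on the sphere spans a Lebesgue-null cone, so if the
projections met only in a null set of directions, the integral of
`φ (r v) * conj (ψ (r v)) * exp (-‖v‖²)` over all `(r, v)` would vanish. Integrating first in `v`
turns it into an integral of Gaussians against `σ`, which is positive.

The energies enter through the absolute convergence of this double integral: as
`(s - 1) + (t - 1) = 0`, the AM-GM inequality gives `|φ ψ| ≤ |r|^(s-1) |φ|² + |r|^(t-1) |ψ|²`, and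
the integrals of the two terms are constant multiples of the `s`-energy of `μ` and the `t`-energy
of `ν`.
-/

open Filter Topology Module

section Fourier

theorem integrable_exp_neg_sq_norm_div_four {E : Type*} [NormedAddCommGroup E] [MeasurableSpace E]
    [BorelSpace E] (m : Measure E) [IsFiniteMeasure m] (r : ℝ) :
    Integrable (fun x => Real.exp (-(r * ‖x‖) ^ 2 / 4)) m := by
  refine .of_bound (Continuous.aestronglyMeasurable (by fun_prop)) 1 (.of_forall fun x => ?_)
  rw [Real.norm_of_nonneg (Real.exp_nonneg _), Real.exp_le_one_iff, neg_div, neg_nonpos]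
  positivity

theorem tendsto_integral_mul_exp_neg_inv_mul_sq_norm {E : Type*} [NormedAddCommGroup E]
    [MeasurableSpace E] [BorelSpace E] {m : Measure E} {f : E → ℂ} (hf : Integrable f m) :
    Tendsto (fun a : ℝ => ∫ v, f v * (Real.exp (-a⁻¹ * ‖v‖ ^ 2) : ℝ) ∂m) atTop
      (𝓝 (∫ v, f v ∂m)) := by
  refine tendsto_integral_filter_of_dominated_convergence (‖f ·‖)
    (.of_forall fun a => hf.aestronglyMeasurable.mul (by fun_prop)) ?_ hf.norm
    (.of_forall fun v => ?_)
  · filter_upwards [eventually_gt_atTop 0] with a ha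
    refine .of_forall fun v => ?_
    rw [norm_mul, Complex.norm_real, Real.norm_of_nonneg (Real.exp_nonneg _)]
    refine mul_le_of_le_one_right (norm_nonneg _) (Real.exp_le_one_iff.2 ?_)
    rw [neg_mul, neg_nonpos]
    positivity
  · have hexp : Tendsto (fun a : ℝ => Real.exp (-a⁻¹ * ‖v‖ ^ 2)) atTop (𝓝 1) := by
      simpa [Function.comp_def] using (Real.continuous_exp.tendsto _).comp
        (tendsto_inv_atTop_zero.neg.mul_const (‖v‖ ^ 2))
    simpa using ((Complex.continuous_ofReal.tendsto _).comp hexp).const_mul (f v)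

variable {V : Type*} [NormedAddCommGroup V] [InnerProductSpace ℝ V] [MeasurableSpace V]
  [BorelSpace V]

theorem charFun_map_inner_right (μ : Measure V) (e : V) (r : ℝ) :
    charFun (μ.map fun x => ⟪x, e⟫) r = charFun μ (r • e) := by
  rw [charFun_apply, charFun_apply, integral_map (by fun_prop) (by fun_prop)]
  simp only [real_inner_smul_right, RCLike.inner_apply, conj_trivial]

variable [FiniteDimensional ℝ V] (μ : Measure V) [IsFiniteMeasure μ]

theorem integrable_exp_neg_mul_sq_norm {b : ℝ} (hb : 0 < b) :
    Integrable fun v : V => Real.exp (-b * ‖v‖ ^ 2) := by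
  have h := (GaussianFourier.integrable_cexp_neg_mul_sq_norm_add (V := V) (b := b)
    (by simpa using hb) 0 0).norm
  simpa [Complex.norm_exp, ← Complex.ofReal_pow] using h

theorem integral_charFun_mul_exp_neg_mul_sq_norm {b : ℝ} (hb : 0 < b) :
    ∫ v, charFun μ v * (Real.exp (-b * ‖v‖ ^ 2) : ℝ) =
      ((Real.pi / b) ^ (finrank ℝ V / 2 : ℝ) *
        ∫ x, Real.exp (-‖x‖ ^ 2 / (4 * b)) ∂μ : ℝ) := by
  have hgauss (x : V) : ∫ v : V, Complex.exp (⟪x, v⟫ * Complex.I) * Real.exp (-b * ‖v‖ ^ 2) =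
      ((Real.pi / b) ^ (finrank ℝ V / 2 : ℝ) * Real.exp (-‖x‖ ^ 2 / (4 * b)) : ℝ) := by
    have h := GaussianFourier.integral_cexp_neg_mul_sq_norm_add (b := b) (by simpa using hb)
      Complex.I x
    simp only [Complex.ofReal_exp, ← Complex.exp_add]
    convert h using 1
    · congr! 3 with v
      push_cast
      ring
    · rw [Complex.I_sq, Complex.ofReal_mul, Complex.ofReal_cpow (by positivity)]
      push_cast
      ring_nf
  have hint : Integrable (fun p : V × V =>
      Complex.exp (⟪p.2, p.1⟫ * Complex.I) * (Real.exp (-b * ‖p.1‖ ^ 2) : ℝ))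
      (volume.prod μ) := by
    refine ((integrable_exp_neg_mul_sq_norm hb).comp_fst μ).mono
      (Continuous.aestronglyMeasurable (by fun_prop)) (.of_forall fun p => ?_)
    simp only [norm_mul, Complex.norm_exp_ofReal_mul_I, one_mul, Complex.norm_real, le_refl]
  simp only [charFun_apply, ← integral_mul_const]
  rw [integral_integral_swap hint]
  simp only [hgauss, integral_complex_ofReal, integral_const_mul]

-- The integral is a multiple of the density of `μ` at `0`, a limit of Gaussian averages of `μ`.
theorem integral_charFun_eq_zero_of_ae_le_norm (hint : Integrable (charFun μ)) {δ : ℝ}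
    (hδ : 0 < δ) (hμ : ∀ᵐ x ∂μ, δ ≤ ‖x‖) : ∫ v, charFun μ v = 0 := by
  refine tendsto_nhds_unique (tendsto_integral_mul_exp_neg_inv_mul_sq_norm hint) ?_
  set k : ℝ := finrank ℝ V / 2
  have hzero : Tendsto (fun a : ℝ => Real.pi ^ k * μ.real univ *
      (a ^ k * Real.exp (-(δ ^ 2 / 4) * a))) atTop (𝓝 0) := by
    simpa using (tendsto_rpow_mul_exp_neg_mul_atTop_nhds_zero k (δ ^ 2 / 4)
      (by positivity)).const_mul (Real.pi ^ k * μ.real univ)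
  refine squeeze_zero_norm' ?_ hzero
  filter_upwards [eventually_gt_atTop 0] with a ha
  have hdecay : ‖∫ x, Real.exp (-‖x‖ ^ 2 / (4 * a⁻¹)) ∂μ‖ ≤
      Real.exp (-(δ ^ 2 / 4) * a) * μ.real univ := by
    refine norm_integral_le_of_norm_le_const ?_
    filter_upwards [hμ] with x hx
    have hsq : δ ^ 2 ≤ ‖x‖ ^ 2 := by gcongr
    have hdiv : -‖x‖ ^ 2 / (4 * a⁻¹) = -(‖x‖ ^ 2 / 4) * a := by field_simp
    rw [Real.norm_of_nonneg (Real.exp_nonneg _), hdiv]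
    gcongr
  rw [integral_charFun_mul_exp_neg_mul_sq_norm μ (inv_pos.2 ha), Complex.norm_real, norm_mul,
    Real.norm_of_nonneg (by positivity), div_inv_eq_mul, Real.mul_rpow Real.pi_pos.le ha.le]
  calc Real.pi ^ k * a ^ k * ‖∫ x, Real.exp (-‖x‖ ^ 2 / (4 * a⁻¹)) ∂μ‖
      ≤ Real.pi ^ k * a ^ k * (Real.exp (-(δ ^ 2 / 4) * a) * μ.real univ) := by gcongr
    _ = _ := by ring

theorem integral_charFun_smul_mul_exp_neg_sq_norm (r : ℝ) :
    ∫ v, charFun μ (r • v) * (Real.exp (-‖v‖ ^ 2) : ℝ) =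
      (Real.pi ^ (finrank ℝ V / 2 : ℝ) * ∫ x, Real.exp (-(r * ‖x‖) ^ 2 / 4) ∂μ : ℝ) := by
  have h := integral_charFun_mul_exp_neg_mul_sq_norm (μ.map (r • ·)) one_pos
  rw [integral_map (by fun_prop) (by fun_prop)] at h
  simpa [charFun_map_smul, norm_smul, mul_pow] using h

end Fourier

section Separation

variable {V : Type*} [NormedAddCommGroup V] [InnerProductSpace ℝ V] [MeasurableSpace V]
  [BorelSpace V] (σ : Measure V) [IsFiniteMeasure σ]

theorem integral_charFun_smul_eq_zero_of_ae_le_abs_inner {v : V}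
    (hint : Integrable fun r : ℝ => charFun σ (r • v)) {δ : ℝ} (hδ : 0 < δ)
    (hσ : ∀ᵐ z ∂σ, δ ≤ |⟪z, v⟫|) : ∫ r : ℝ, charFun σ (r • v) = 0 := by
  have hmeas : AEMeasurable (fun z => ⟪z, v⟫) σ := by fun_prop
  simp only [← charFun_map_inner_right] at hint ⊢
  refine integral_charFun_eq_zero_of_ae_le_norm _ hint hδ ?_
  exact (ae_map_iff hmeas (measurableSet_le measurable_const measurable_norm)).2 hσ

variable [FiniteDimensional ℝ V] [NeZero σ]

theorem not_ae_exists_pos_ae_le_abs_inner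
    (hint : Integrable fun p : ℝ × V =>
      charFun σ (p.1 • p.2) * (Real.exp (-‖p.2‖ ^ 2) : ℝ)) :
    ¬ ∀ᵐ v : V, ∃ δ > 0, ∀ᵐ z ∂σ, δ ≤ |⟪z, v⟫| := by
  intro hsep
  have hradial : ∀ᵐ v : V,
      ∫ r : ℝ, charFun σ (r • v) * (Real.exp (-‖v‖ ^ 2) : ℝ) = 0 := by
    filter_upwards [hsep, hint.prod_left_ae] with v ⟨δ, hδ, hσ⟩ hv
    have hunit : IsUnit ((Real.exp (-‖v‖ ^ 2) : ℝ) : ℂ) := by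
      simp
    rw [integral_mul_const, integral_charFun_smul_eq_zero_of_ae_le_abs_inner σ
      ((integrable_mul_const_iff hunit _).1 hv) hδ hσ, zero_mul]
  set F : ℝ → ℝ := fun r => Real.pi ^ (finrank ℝ V / 2 : ℝ) *
    ∫ z, Real.exp (-(r * ‖z‖) ^ 2 / 4) ∂σ
  have hF (r : ℝ) : ∫ v : V, charFun σ (r • v) * (Real.exp (-‖v‖ ^ 2) : ℝ) = (F r : ℂ) :=
    integral_charFun_smul_mul_exp_neg_sq_norm σ r
  have hFpos (r : ℝ) : 0 < F r :=
    mul_pos (by positivity) (integral_exp_pos (integrable_exp_neg_sq_norm_div_four σ r))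
  have hFint : Integrable F := by
    have h := hint.integral_prod_left
    simp only [hF] at h
    simpa using h.re
  have hFzero : ∫ r, F r = 0 := by
    rw [← Complex.ofReal_eq_zero, ← integral_complex_ofReal]
    simp only [← hF]
    rw [integral_integral_swap hint]
    exact integral_eq_zero_of_ae hradial
  rw [integral_eq_zero_iff_of_nonneg (fun r => (hFpos r).le) hFint] at hFzero
  obtain ⟨r, hr⟩ := hFzero.exists
  exact (hFpos r).ne' hr

end Separation

section Energy

/-- The convolution of `μ` with the reflection of `ν`: for probability measures, the law of `x - y`
for independent `x ∼ μ` and `y ∼ ν`. -/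
noncomputable abbrev diffMeasure {G : Type*} [Sub G] [MeasurableSpace G] (μ ν : Measure G) :
    Measure G :=
  (μ.prod ν).map fun p => p.1 - p.2

/-- The Riesz `s`-energy `∬ |x - y|⁻ˢ dμ(x) dμ(y)`, with the convention `0⁻ˢ = ∞` for `0 < s`. -/
noncomputable def rieszEnergy {E : Type*} [NormedAddCommGroup E] [MeasurableSpace E] (s : ℝ)
    (μ : Measure E) : ℝ≥0∞ :=
  ∫⁻ x, ∫⁻ y, ‖x - y‖ₑ ^ (-s) ∂μ ∂μ

theorem lintegral_diffMeasure {G : Type*} [Sub G] [MeasurableSpace G] [MeasurableSub₂ G]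
    (μ ν : Measure G) [SFinite ν] {f : G → ℝ≥0∞} (hf : Measurable f) :
    ∫⁻ z, f z ∂diffMeasure μ ν = ∫⁻ x, ∫⁻ y, f (x - y) ∂ν ∂μ := by
  rw [lintegral_map hf (by fun_prop), lintegral_prod _ (by fun_prop)]

theorem integrable_abs_rpow_mul_exp_neg_sq_div_four {p : ℝ} (hp : -1 < p) :
    Integrable fun r : ℝ => |r| ^ p * Real.exp (-r ^ 2 / 4) := by
  have h := (integrable_fun_norm_addHaar (volume : Measure ℝ)
    (f := fun x => x ^ p * Real.exp (-(1 / 4) * x ^ 2))).2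
      (by simpa using integrableOn_rpow_mul_exp_neg_mul_sq (b := 1 / 4) (by norm_num) hp)
  refine h.congr (.of_forall fun r => ?_)
  simp only [Real.norm_eq_abs, sq_abs]
  ring_nf

theorem exists_lintegral_rpow_mul_exp_le {s : ℝ} (hs : 0 < s) :
    ∃ C ≠ ∞, ∀ a : ℝ, ∫⁻ r : ℝ, ENNReal.ofReal (|r| ^ (s - 1) * Real.exp (-(r * a) ^ 2 / 4)) ≤
      C * ‖a‖ₑ ^ (-s) := by
  set g : ℝ → ℝ := fun r => |r| ^ (s - 1) * Real.exp (-r ^ 2 / 4)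
  have hg : Integrable g := integrable_abs_rpow_mul_exp_neg_sq_div_four (by linarith)
  -- The summand `1` makes the right-hand side `∞` at `a = 0`.
  refine ⟨(∫⁻ r, ENNReal.ofReal (g r)) + 1, by simpa using hg.lintegral_lt_top.ne, fun a => ?_⟩
  rcases eq_or_ne a 0 with rfl | ha
  · simp [hs]
  have hscale (r : ℝ) : |r| ^ (s - 1) * Real.exp (-(r * a) ^ 2 / 4) =
      |a| ^ (1 - s) * g (r * a) := by
    have : |a| ^ (1 - s) * |a| ^ (s - 1) = 1 := by
      rw [← Real.rpow_add (abs_pos.2 ha)]; simp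
    simp only [g, abs_mul, Real.mul_rpow (abs_nonneg r) (abs_nonneg a)]
    linear_combination (-|r| ^ (s - 1) * Real.exp (-(r * a) ^ 2 / 4)) * this
  have hmap : ∫⁻ r, ENNReal.ofReal (g (r * a)) =
      ENNReal.ofReal |a⁻¹| * ∫⁻ r, ENNReal.ofReal (g r) := by
    rw [← smul_eq_mul, ← lintegral_smul_measure, ← Real.map_volume_mul_right ha,
      (measurableEmbedding_mulRight₀ ha).lintegral_map]
  simp only [hscale, ENNReal.ofReal_mul (Real.rpow_nonneg (abs_nonneg a) _)]
  rw [lintegral_const_mul' _ _ ENNReal.ofReal_ne_top, hmap, ← mul_assoc,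
    ← ENNReal.ofReal_mul (by positivity), mul_comm]
  have hpow : ENNReal.ofReal (|a| ^ (1 - s) * |a⁻¹|) = ‖a‖ₑ ^ (-s) := by
    rw [Real.enorm_eq_ofReal_abs, ENNReal.ofReal_rpow_of_pos (abs_pos.2 ha), abs_inv,
      ← Real.rpow_neg_one, ← Real.rpow_add (abs_pos.2 ha)]
    ring_nf
  rw [hpow]
  gcongr
  exact le_self_add

variable {V : Type*} [NormedAddCommGroup V] [InnerProductSpace ℝ V] [MeasurableSpace V]
  [BorelSpace V] (μ ν : Measure V) [IsFiniteMeasure μ] [IsFiniteMeasure ν]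

theorem charFun_diffMeasure [SecondCountableTopology V] (v : V) :
    charFun (diffMeasure μ ν) v = charFun μ v * starRingEnd ℂ (charFun ν v) := by
  rw [← charFun_neg]
  simp only [charFun_apply]
  rw [integral_map (by fun_prop) (by fun_prop), ← integral_prod_mul]
  refine integral_congr_ae (.of_forall fun p => ?_)
  simp only [inner_sub_left, inner_neg_right, ← Complex.exp_add]
  push_cast
  ring_nf

theorem norm_charFun_diffMeasure_le [SecondCountableTopology V] {s t : ℝ} (hst : s + t = 2) {r : ℝ}
    (hr : r ≠ 0) (v : V) :
    ‖charFun (diffMeasure μ ν) v‖ ≤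
      |r| ^ (s - 1) * ‖charFun μ v‖ ^ 2 + |r| ^ (t - 1) * ‖charFun ν v‖ ^ 2 := by
  rw [charFun_diffMeasure, norm_mul, RCLike.norm_conj]
  have hst' : |r| ^ (s - 1) * |r| ^ (t - 1) = 1 := by
    rw [← Real.rpow_add (abs_pos.2 hr), show s - 1 + (t - 1) = 0 by linarith, Real.rpow_zero]
  have hpos : 0 < |r| ^ (s - 1) := Real.rpow_pos_of_pos (abs_pos.2 hr) _
  generalize |r| ^ (s - 1) = x, |r| ^ (t - 1) = y, ‖charFun μ v‖ = a, ‖charFun ν v‖ = b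
    at *
  refine le_of_mul_le_mul_left ?_ hpos
  calc x * (a * b) ≤ (x * a) ^ 2 + b ^ 2 := by
        nlinarith [sq_nonneg (x * a - b), sq_nonneg (x * a), sq_nonneg b]
    _ = x * (x * a ^ 2 + y * b ^ 2) := by linear_combination (-b ^ 2) * hst'

variable [FiniteDimensional ℝ V]

theorem lintegral_norm_charFun_smul_sq_mul_exp (r : ℝ) :
    ∫⁻ v, ENNReal.ofReal (‖charFun μ (r • v)‖ ^ 2 * Real.exp (-‖v‖ ^ 2)) =
      ENNReal.ofReal (Real.pi ^ (finrank ℝ V / 2 : ℝ)) *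
        ∫⁻ z, ENNReal.ofReal (Real.exp (-(r * ‖z‖) ^ 2 / 4)) ∂diffMeasure μ μ := by
  have h := integral_charFun_smul_mul_exp_neg_sq_norm (diffMeasure μ μ) r
  have hsq (v : V) : charFun (diffMeasure μ μ) (r • v) * (Real.exp (-‖v‖ ^ 2) : ℝ) =
      (‖charFun μ (r • v)‖ ^ 2 * Real.exp (-‖v‖ ^ 2) : ℝ) := by
    rw [charFun_diffMeasure, Complex.mul_conj, Complex.normSq_eq_norm_sq]
    push_cast
    rfl
  simp only [hsq] at h
  rw [integral_complex_ofReal, Complex.ofReal_inj] at h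
  rw [← ofReal_integral_eq_lintegral_ofReal _ (.of_forall fun v => by positivity), h,
    ENNReal.ofReal_mul (by positivity), ofReal_integral_eq_lintegral_ofReal _
      (.of_forall fun v => by positivity)]
  · exact integrable_exp_neg_sq_norm_div_four _ r
  · have hexp : Integrable fun v : V => Real.exp (-‖v‖ ^ 2) := by
      simpa using integrable_exp_neg_mul_sq_norm (V := V) one_pos
    refine hexp.bdd_mul (c := μ.real univ ^ 2) (by fun_prop) (.of_forall fun v => ?_)
    rw [Real.norm_of_nonneg (by positivity)]
    gcongr
    exact norm_charFun_le _

theorem integrable_rpow_mul_norm_charFun_smul_sq_mul_exp {s : ℝ} (hs : 0 < s)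
    (hμ : rieszEnergy s μ ≠ ∞) :
    Integrable fun p : ℝ × V =>
      |p.1| ^ (s - 1) * (‖charFun μ (p.1 • p.2)‖ ^ 2 * Real.exp (-‖p.2‖ ^ 2)) := by
  refine ⟨Measurable.aestronglyMeasurable (by fun_prop), ?_⟩
  obtain ⟨C, hC, hle⟩ := exists_lintegral_rpow_mul_exp_le hs
  set c := ENNReal.ofReal (Real.pi ^ (finrank ℝ V / 2 : ℝ))
  rw [hasFiniteIntegral_iff_ofReal (.of_forall fun p => by positivity), Measure.volume_eq_prod,
    lintegral_prod _ (by fun_prop)]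
  calc ∫⁻ r : ℝ, ∫⁻ v : V, ENNReal.ofReal
          (|r| ^ (s - 1) * (‖charFun μ (r • v)‖ ^ 2 * Real.exp (-‖v‖ ^ 2)))
      = ∫⁻ r : ℝ, c * ∫⁻ z, ENNReal.ofReal
          (|r| ^ (s - 1) * Real.exp (-(r * ‖z‖) ^ 2 / 4)) ∂diffMeasure μ μ := by
        refine lintegral_congr fun r => ?_
        simp only [ENNReal.ofReal_mul (Real.rpow_nonneg (abs_nonneg r) _)]
        rw [lintegral_const_mul' _ _ ENNReal.ofReal_ne_top,
          lintegral_const_mul' _ _ ENNReal.ofReal_ne_top,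
          lintegral_norm_charFun_smul_sq_mul_exp, mul_left_comm]
    _ = c * ∫⁻ z, (∫⁻ r : ℝ, ENNReal.ofReal
          (|r| ^ (s - 1) * Real.exp (-(r * ‖z‖) ^ 2 / 4))) ∂diffMeasure μ μ := by
        rw [lintegral_const_mul' _ _ ENNReal.ofReal_ne_top, lintegral_lintegral_swap (by fun_prop)]
    _ ≤ c * ∫⁻ z, C * ‖z‖ₑ ^ (-s) ∂diffMeasure μ μ := by
        gcongr with z
        simpa using hle ‖z‖
    _ = c * (C * rieszEnergy s μ) := by
        rw [lintegral_const_mul' _ _ hC, lintegral_diffMeasure _ _ (by fun_prop), rieszEnergy]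
    _ < ∞ := by finiteness

theorem integrable_charFun_diffMeasure_smul_mul_exp {s t : ℝ} (hs : 0 < s) (ht : 0 < t)
    (hst : s + t = 2) (hμ : rieszEnergy s μ ≠ ∞) (hν : rieszEnergy t ν ≠ ∞) :
    Integrable fun p : ℝ × V =>
      charFun (diffMeasure μ ν) (p.1 • p.2) * (Real.exp (-‖p.2‖ ^ 2) : ℝ) := by
  refine ((integrable_rpow_mul_norm_charFun_smul_sq_mul_exp μ hs hμ).add
    (integrable_rpow_mul_norm_charFun_smul_sq_mul_exp ν ht hν)).mono'
      (Measurable.aestronglyMeasurable (by fun_prop)) ?_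
  have hne : ∀ᵐ p : ℝ × V, p.1 ≠ 0 :=
    Measure.quasiMeasurePreserving_fst.ae (Measure.ae_ne volume 0)
  filter_upwards [hne] with p hp
  rw [norm_mul, Complex.norm_real, Real.norm_of_nonneg (Real.exp_nonneg _), Pi.add_apply,
    ← mul_assoc, ← mul_assoc, ← add_mul]
  gcongr
  exact norm_charFun_diffMeasure_le μ ν hst hp _

end Energy

section Sphere

open scoped Pointwise

variable {E : Type*} [NormedAddCommGroup E] [NormedSpace ℝ E]

theorem Ioo_zero_one_smul_subset_iUnion_closedBall {e : E} (he : ‖e‖ ≤ 1) {r : ℝ} (hr : 0 < r)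
    {U : Set E} (hU : U ⊆ closedBall e r) :
    Ioo (0 : ℝ) 1 • U ⊆ ⋃ k ∈ Finset.range ⌈1 / r⌉₊, closedBall ((k * r) • e) (2 * r) := by
  rintro _ ⟨t, ⟨ht0, ht1⟩, u, hu, rfl⟩
  have hfloor : ⌊t / r⌋₊ * r ≤ t := (le_div_iff₀ hr).1 (Nat.floor_le (by positivity))
  have hfloor' : t < (⌊t / r⌋₊ + 1) * r := (div_lt_iff₀ hr).1 (Nat.lt_floor_add_one _)
  have hlt : ⌊t / r⌋₊ < ⌈1 / r⌉₊ := by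
    refine Nat.lt_ceil.2 ((Nat.floor_le (by positivity)).trans_lt ?_)
    gcongr
  refine mem_biUnion (Finset.mem_coe.2 (Finset.mem_range.2 hlt)) ?_
  have hu' : ‖u - e‖ ≤ r := mem_closedBall_iff_norm.1 (hU hu)
  rw [mem_closedBall_iff_norm]
  calc ‖t • u - (⌊t / r⌋₊ * r) • e‖ = ‖t • (u - e) + (t - ⌊t / r⌋₊ * r) • e‖ := by
        congr 1; module
    _ ≤ t * ‖u - e‖ + (t - ⌊t / r⌋₊ * r) * ‖e‖ := by
        grw [norm_add_le, norm_smul, norm_smul, Real.norm_of_nonneg ht0.le,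
          Real.norm_of_nonneg (sub_nonneg.2 hfloor)]
    _ ≤ 1 * r + r * 1 := by gcongr; linarith
    _ = 2 * r := by ring

variable [FiniteDimensional ℝ E] [MeasurableSpace E] [BorelSpace E] (μ : Measure E)
  [μ.IsAddHaarMeasure]

theorem measure_Ioo_zero_one_smul_le {e : E} (he : ‖e‖ = 1) {r : ℝ} (hr : 0 < r) (hr1 : r ≤ 1)
    {U : Set E} (hU : U ⊆ closedBall e r) :
    μ (Ioo (0 : ℝ) 1 • U) ≤
      2 ^ (finrank ℝ E + 1) * μ (ball 0 1) * ENNReal.ofReal r ^ (finrank ℝ E - 1 : ℝ) := by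
  have hd : 0 < finrank ℝ E := by
    have : Nontrivial E := ⟨⟨e, 0, by rintro rfl; simp at he⟩⟩
    exact finrank_pos
  have hceil : (⌈1 / r⌉₊ : ℝ) ≤ 2 / r := by
    have h1 : 1 ≤ 1 / r := (one_le_div hr).2 hr1
    have h2 := (Nat.ceil_lt_add_one (zero_le_one.trans h1)).le
    have h3 : 2 / r = 1 / r + 1 / r := by ring
    linarith
  calc μ (Ioo (0 : ℝ) 1 • U)
      ≤ ∑ k ∈ Finset.range ⌈1 / r⌉₊, μ (closedBall ((k * r : ℝ) • e) (2 * r)) :=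
        (measure_mono (Ioo_zero_one_smul_subset_iUnion_closedBall he.le hr hU)).trans
          (measure_biUnion_finset_le _ _)
    _ = ENNReal.ofReal ⌈1 / r⌉₊ * ENNReal.ofReal ((2 * r) ^ finrank ℝ E) * μ (ball 0 1) := by
        simp only [μ.addHaar_closedBall _ (by positivity : 0 ≤ 2 * r), Finset.sum_const,
          Finset.card_range, nsmul_eq_mul, ENNReal.ofReal_natCast, mul_assoc]
    _ ≤ ENNReal.ofReal (2 / r) * ENNReal.ofReal ((2 * r) ^ finrank ℝ E) * μ (ball 0 1) := by
        gcongr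
    _ = ENNReal.ofReal (2 ^ (finrank ℝ E + 1) * r ^ (finrank ℝ E - 1 : ℝ)) * μ (ball 0 1) := by
        rw [← ENNReal.ofReal_mul (by positivity), Real.rpow_sub hr, Real.rpow_natCast,
          Real.rpow_one]
        congr 2
        field_simp
        ring
    _ = _ := by
        have hd' : 0 ≤ (finrank ℝ E - 1 : ℝ) := by
          rw [sub_nonneg]; exact_mod_cast hd
        rw [ENNReal.ofReal_mul (by positivity), ENNReal.ofReal_pow zero_le_two,
          ENNReal.ofReal_ofNat, ENNReal.ofReal_rpow_of_nonneg hr.le hd']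
        ring

theorem toSphere_le_mul_ediam_rpow {s : Set (sphere (0 : E) 1)} (hs : ediam s < 1) :
    μ.toSphere s ≤ finrank ℝ E * (2 ^ (finrank ℝ E + 1) * μ (ball 0 1)) *
      ediam s ^ (finrank ℝ E - 1 : ℝ) := by
  rcases s.eq_empty_or_nonempty with rfl | ⟨e, he⟩
  · simp
  -- The diameter may be zero, so the estimate is applied to radii decreasing to it.
  have hfin : ediam s ≠ ∞ := hs.ne_top
  have hlim : Tendsto (fun r : ℝ => finrank ℝ E * (2 ^ (finrank ℝ E + 1) * μ (ball 0 1)) *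
      ENNReal.ofReal r ^ (finrank ℝ E - 1 : ℝ)) (𝓝[>] (ediam s).toReal)
      (𝓝 (finrank ℝ E * (2 ^ (finrank ℝ E + 1) * μ (ball 0 1)) *
        ediam s ^ (finrank ℝ E - 1 : ℝ))) := by
    have hcont := (ENNReal.continuous_rpow_const (y := (finrank ℝ E - 1 : ℝ))).comp
      ENNReal.continuous_ofReal
    have h := (hcont.tendsto (ediam s).toReal).mono_left
      (nhdsWithin_le_nhds (s := Ioi (ediam s).toReal))
    simp only [Function.comp_apply, ENNReal.ofReal_toReal hfin] at h
    exact ENNReal.Tendsto.const_mul h (.inr (by finiteness))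
  refine ge_of_tendsto hlim ?_
  have hlt : (ediam s).toReal < 1 := by
    simpa using (ENNReal.toReal_lt_toReal hfin ENNReal.one_ne_top).2 hs
  filter_upwards [Ioo_mem_nhdsGT hlt] with r ⟨hr, hr1⟩
  have hsub : s ⊆ closedBall e r := fun u hu =>
    (dist_le_diam_of_mem' hfin hu he).trans hr.le
  have himage : (↑) '' closedBall e r ⊆ closedBall (e : E) r := by
    rintro _ ⟨u, hu, rfl⟩
    exact hu
  grw [hsub, μ.toSphere_apply' measurableSet_closedBall, measure_Ioo_zero_one_smul_le μ
    (norm_eq_of_mem_sphere e) (ENNReal.toReal_nonneg.trans_lt hr) hr1.le himage,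
    mul_assoc _ (2 ^ _ * _)]

theorem toSphere_absolutelyContinuous_hausdorffMeasure :
    μ.toSphere ≪ μH[(finrank ℝ E : ℝ) - 1] := by
  rcases subsingleton_or_nontrivial E with _ | _
  · rw [μ.toSphere_eq_zero_iff.2 ‹_›]
    exact .zero _
  set C := finrank ℝ E * (2 ^ (finrank ℝ E + 1) * μ (ball 0 1))
  have hC0 : C ≠ 0 := by
    simp [C, (finrank_pos (R := ℝ) (M := E)).ne', (measure_ball_pos μ (0 : E) one_pos).ne']
  have hC : C ≠ ∞ := by finiteness
  have hle : C⁻¹ • μ.toSphere ≤ μH[(finrank ℝ E : ℝ) - 1] := by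
    refine Measure.le_hausdorffMeasure _ _ 2⁻¹ (by simp) fun s hs => ?_
    rw [Measure.smul_apply, smul_eq_mul, ENNReal.inv_mul_le_iff hC0 hC]
    exact toSphere_le_mul_ediam_rpow μ (hs.trans_lt (by simp))
  exact (Measure.absolutelyContinuous_smul (ENNReal.inv_ne_zero.2 hC)).trans
    hle.absolutelyContinuous

theorem ae_inv_norm_smul_of_ae_toSphere [Nontrivial E] {p : E → Prop}
    (h : ∀ᵐ e : sphere (0 : E) 1 ∂μ.toSphere, p e) : ∀ᵐ x ∂μ, p (‖x‖⁻¹ • x) := by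
  have hprod : ∀ᵐ y ∂μ.toSphere.prod (Measure.volumeIoiPow (finrank ℝ E - 1)), p (y.1 : E) :=
    Measure.quasiMeasurePreserving_fst.ae (p := fun e : sphere (0 : E) 1 => p e) h
  have hcomap := μ.measurePreserving_homeomorphUnitSphereProd.quasiMeasurePreserving.ae hprod
  have hmeas : MeasurableSet ({0}ᶜ : Set E) := (measurableSet_singleton 0).compl
  have hrestrict : ∀ᵐ x ∂μ.restrict {0}ᶜ, p (‖x‖⁻¹ • x) := by
    rw [← map_comap_subtype_coe hmeas, (MeasurableEmbedding.subtype_coe hmeas).ae_map_iff]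
    simpa only [homeomorphUnitSphereProd_apply_fst_coe] using hcomap
  rwa [Measure.restrict_eq_self_of_ae_mem (s := {0}ᶜ) (Measure.ae_ne μ 0)] at hrestrict

theorem ae_inv_norm_smul_notMem_of_hausdorffMeasure_eq_zero [Nontrivial E] {A : Set E}
    (hA : μH[(finrank ℝ E : ℝ) - 1] (A ∩ sphere 0 1) = 0) : ∀ᵐ x ∂μ, ‖x‖⁻¹ • x ∉ A := by
  have hd : 0 ≤ (finrank ℝ E : ℝ) - 1 := by
    rw [sub_nonneg]
    exact_mod_cast (finrank_pos (R := ℝ) (M := E))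
  have hnull : μH[(finrank ℝ E : ℝ) - 1] {e : sphere (0 : E) 1 | (e : E) ∈ A} = 0 := by
    rw [← isometry_subtype_coe.hausdorffMeasure_image (.inl hd)]
    refine measure_mono_null ?_ hA
    rintro _ ⟨e, he, rfl⟩
    exact ⟨he, e.2⟩
  exact ae_inv_norm_smul_of_ae_toSphere μ (p := (· ∉ A)) (measure_eq_zero_iff_ae_notMem.1
    (toSphere_absolutelyContinuous_hausdorffMeasure μ hnull))

end Sphere

section Projections

variable {E : Type*} [NormedAddCommGroup E] [MeasurableSpace E] {μ ν : Measure E} {s : ℝ}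

theorem rieszEnergy_mono (h : μ ≤ ν) : rieszEnergy s μ ≤ rieszEnergy s ν :=
  lintegral_mono' h fun _ => lintegral_mono' h le_rfl

theorem measure_closedBall_lt_top_of_rieszEnergy_ne_top [OpensMeasurableSpace E] (hs : 0 < s)
    (hμ : rieszEnergy s μ ≠ ∞) (a : E) (R : ℝ) : μ (closedBall a R) < ∞ := by
  set B := closedBall a R
  set c : ℝ≥0∞ := ENNReal.ofReal (R + R) ^ (-s)
  have hc : c ≠ 0 := by simp [c, ENNReal.rpow_eq_zero_iff, hs, hs.le]
  have hkernel {x y : E} (hx : x ∈ B) (hy : y ∈ B) : c ≤ ‖x - y‖ₑ ^ (-s) := by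
    simp only [c, ENNReal.rpow_neg, ← ofReal_norm, ← dist_eq_norm]
    gcongr
    exact (dist_triangle_right x y a).trans (add_le_add hx hy)
  have hle : c * μ B * μ B ≤ rieszEnergy s μ :=
    calc c * μ B * μ B = ∫⁻ _ in B, ∫⁻ _ in B, c ∂μ ∂μ := by simp only [setLIntegral_const]
      _ ≤ ∫⁻ x in B, ∫⁻ y in B, ‖x - y‖ₑ ^ (-s) ∂μ ∂μ :=
        setLIntegral_mono' measurableSet_closedBall fun x hx =>
          setLIntegral_mono' measurableSet_closedBall fun y hy => hkernel hx hy
      _ ≤ rieszEnergy s μ := rieszEnergy_mono Measure.restrict_le_self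
  by_contra! htop
  rw [top_le_iff] at htop
  rw [htop, ENNReal.mul_top hc, ENNReal.top_mul_top, top_le_iff] at hle
  exact hμ hle

theorem exists_isCompact_subset_support_of_rieszEnergy_ne_top [OpensMeasurableSpace E]
    [ProperSpace E] (hs : 0 < s) (hμ : rieszEnergy s μ ≠ ∞) (hμ0 : μ ≠ 0) :
    ∃ K ⊆ μ.support, IsCompact K ∧ μ K ≠ 0 ∧ μ K ≠ ∞ := by
  obtain ⟨R, hR⟩ : ∃ R : ℕ, μ (closedBall 0 R) ≠ 0 := by
    by_contra! hnull
    rw [← Measure.measure_univ_ne_zero, ← iUnion_closedBall_nat 0] at hμ0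
    exact hμ0 (measure_iUnion_null hnull)
  have hK : μ (μ.support ∩ closedBall 0 R) = μ (closedBall 0 R) :=
    Measure.measure_inter_eq_of_ae Measure.support_mem_ae
  refine ⟨μ.support ∩ closedBall 0 R, inter_subset_left,
    (isCompact_closedBall 0 _).inter_left Measure.isClosed_support, hK ▸ hR, hK ▸ ?_⟩
  exact (measure_closedBall_lt_top_of_rieszEnergy_ne_top hs hμ 0 R).ne

variable {V : Type*} [NormedAddCommGroup V] [InnerProductSpace ℝ V]

/-- The unit vectors `e` for which the projections of `K` and `L` to the line spanned by `e`
intersect; the projection of `x` is encoded by its coordinate `⟪x, e⟫` on that line. -/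
def meetingDirections (K L : Set V) : Set V :=
  {e | ‖e‖ = 1 ∧ ((fun x => ⟪x, e⟫) '' K ∩ (fun x => ⟪x, e⟫) '' L).Nonempty}

theorem meetingDirections_mono {K K' L L' : Set V} (hK : K ⊆ K') (hL : L ⊆ L') :
    meetingDirections K L ⊆ meetingDirections K' L' :=
  fun _ he => ⟨he.1, he.2.mono (inter_subset_inter (image_mono hK) (image_mono hL))⟩

theorem exists_pos_forall_le_abs_inner_sub {K L : Set V} (hK : IsCompact K) (hL : IsCompact L)
    {v : V} (hv : ∀ x ∈ K, ∀ y ∈ L, ⟪x, v⟫ ≠ ⟪y, v⟫) :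
    ∃ δ > 0, ∀ x ∈ K, ∀ y ∈ L, δ ≤ |⟪x - y, v⟫| := by
  obtain ⟨δ, hδ, hle⟩ := (hK.prod hL).exists_forall_le' (f := fun p => |⟪p.1 - p.2, v⟫|) (a := 0)
    (by fun_prop) fun p hp => by
      rw [inner_sub_left, abs_pos, sub_ne_zero]
      exact hv p.1 hp.1 p.2 hp.2
  exact ⟨δ, hδ, fun x hx y hy => hle (x, y) ⟨hx, hy⟩⟩

variable [FiniteDimensional ℝ V] [Nontrivial V] [MeasurableSpace V] [BorelSpace V]

theorem hausdorffMeasure_meetingDirections_pos_of_isCompact {s t : ℝ} (hs : 0 < s) (ht : 0 < t)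
    (hst : s + t = 2) {μ ν : Measure V} [IsFiniteMeasure μ] [IsFiniteMeasure ν] [NeZero μ]
    [NeZero ν] (hμ : rieszEnergy s μ ≠ ∞) (hν : rieszEnergy t ν ≠ ∞) {K L : Set V}
    (hK : IsCompact K) (hL : IsCompact L) (hμK : ∀ᵐ x ∂μ, x ∈ K) (hνL : ∀ᵐ y ∂ν, y ∈ L) :
    0 < μH[(finrank ℝ V : ℝ) - 1] (meetingDirections K L) := by
  by_contra! hnull
  have hdir : ∀ᵐ v : V, ‖v‖⁻¹ • v ∉
      {e : V | ((fun x => ⟪x, e⟫) '' K ∩ (fun x => ⟪x, e⟫) '' L).Nonempty} := by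
    refine ae_inv_norm_smul_notMem_of_hausdorffMeasure_eq_zero _
      (measure_mono_null (fun e he => ?_) (nonpos_iff_eq_zero.1 hnull))
    exact ⟨norm_eq_of_mem_sphere ⟨e, he.2⟩, he.1⟩
  have : NeZero (diffMeasure μ ν) := by
    refine ⟨(Measure.map_ne_zero_iff (by fun_prop)).2 (Measure.measure_univ_ne_zero.1 ?_)⟩
    rw [← univ_prod_univ, Measure.prod_prod]
    exact mul_ne_zero (NeZero.ne _) (NeZero.ne _)
  refine not_ae_exists_pos_ae_le_abs_inner (diffMeasure μ ν)
    (integrable_charFun_diffMeasure_smul_mul_exp μ ν hs ht hst hμ hν) ?_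
  filter_upwards [hdir] with v hv
  obtain ⟨δ, hδ, hle⟩ := exists_pos_forall_le_abs_inner_sub hK hL (v := v) fun x hx y hy hxy =>
    hv ⟨⟪x, ‖v‖⁻¹ • v⟫, ⟨x, hx, rfl⟩, y, hy, by simp only [inner_smul_right, hxy]⟩
  refine ⟨δ, hδ, ?_⟩
  rw [ae_map_iff (by fun_prop) (measurableSet_le (by fun_prop) (by fun_prop))]
  filter_upwards [Measure.quasiMeasurePreserving_fst.ae hμK,
    Measure.quasiMeasurePreserving_snd.ae hνL] with p hp₁ hp₂ using hle p.1 hp₁ p.2 hp₂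

theorem stmt_8_general {s t : ℝ} (hs : 0 < s) (ht : 0 < t) (hst : s + t = 2) {μ ν : Measure V}
    (hμ0 : μ ≠ 0) (hν0 : ν ≠ 0) (hμ : rieszEnergy s μ < ∞) (hν : rieszEnergy t ν < ∞) :
    0 < μH[(finrank ℝ V : ℝ) - 1] (meetingDirections μ.support ν.support) := by
  obtain ⟨K, hKμ, hK, hμK0, hμK⟩ :=
    exists_isCompact_subset_support_of_rieszEnergy_ne_top hs hμ.ne hμ0
  obtain ⟨L, hLν, hL, hνL0, hνL⟩ :=
    exists_isCompact_subset_support_of_rieszEnergy_ne_top ht hν.ne hν0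
  have : IsFiniteMeasure (μ.restrict K) := isFiniteMeasure_restrict.2 hμK
  have : IsFiniteMeasure (ν.restrict L) := isFiniteMeasure_restrict.2 hνL
  have : NeZero (μ.restrict K) := ⟨by simpa using hμK0⟩
  have : NeZero (ν.restrict L) := ⟨by simpa using hνL0⟩
  refine (hausdorffMeasure_meetingDirections_pos_of_isCompact hs ht hst
    ((rieszEnergy_mono Measure.restrict_le_self).trans_lt hμ).ne
    ((rieszEnergy_mono Measure.restrict_le_self).trans_lt hν).ne hK hL
    (ae_restrict_mem hK.measurableSet) (ae_restrict_mem hL.measurableSet)).trans_le ?_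
  exact measure_mono (meetingDirections_mono hKμ hLν)

end Projections

theorem sptm_eq_support {n : ℕ} (μ : Measure (EuclideanSpace ℝ (Fin n))) : sptm n μ = μ.support :=
  Set.ext fun _ => nhds_basis_ball.mem_measureSupport.symm

theorem stmt_8 (n : ℕ) (hn : 2 ≤ n) (s t : ℝ) (hs : 0 < s) (ht : 0 < t)
    (hst : s + t = 2)
    (μ ν : Measure (EuclideanSpace ℝ (Fin n)))
    [IsFiniteMeasure μ] [IsFiniteMeasure ν] (hμ0 : μ ≠ 0) (hν0 : ν ≠ 0)
    (hμc : IsCompact (sptm n μ)) (hνc : IsCompact (sptm n ν))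
    (hμe : energyI n s μ < ∞) (hνe : energyI n t ν < ∞) :
    0 < μH[(n : ℝ) - 1]
      {e : EuclideanSpace ℝ (Fin n) | ‖e‖ = 1 ∧
        ((fun x => ⟪x, e⟫) '' sptm n μ ∩ (fun x => ⟪x, e⟫) '' sptm n ν).Nonempty} := by
  have : Nonempty (Fin n) := Fin.pos_iff_nonempty.1 (by lia)
  simpa only [sptm_eq_support, finrank_euclideanSpace_fin, meetingDirections] using
    stmt_8_general hs ht hst hμ0 hν0 hμe hνe
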